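/- arXiv:1310.6921 — 2 statements merged into one kernel-verified Lean document; each statement's English description precedes it below -/
import Mathlib

section
/- The complement of the cycle graph C_6 is a competitivity graph but not a comparability graph: there exists a finite family of rankings of Fin 6 whose competitivity graph is isomorphic to the complement of C_6, while the complement of C_6 admits no transitive orientation of its edges. -/
/-- `i` precedes `j` in the ranking `c` (i.e. the position of `i` is smaller). -/
def Prec {n : ℕ} (c : Equiv.Perm (Fin n)) (i j : Fin n) : Prop :=
  c⁻¹ i < c⁻¹ j

/-- Two nodes compete with respect to a family of rankings `c`. -/
def Compete {n r : ℕ} (c : Fin r → Equiv.Perm (Fin n)) (i j : Fin n) : Prop :=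
  ∃ s t : Fin r, Prec (c s) i j ∧ Prec (c t) j i

/-- The competitivity graph of a family of rankings. -/
def competitivityGraph {n r : ℕ} (c : Fin r → Equiv.Perm (Fin n)) :
    SimpleGraph (Fin n) where
  Adj i j := Compete c i j
  symm := by
    constructor
    rintro i j ⟨s, t, h1, h2⟩
    exact ⟨t, s, h2, h1⟩
  loopless := by
    constructor
    rintro i ⟨s, t, h1, _⟩
    exact lt_irrefl _ h1

/-- The cycle graph on `Fin n`: `i` and `j` are adjacent exactly when they are
consecutive modulo `n`. -/
def cycleGraph (n : ℕ) : SimpleGraph (Fin n) where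
  Adj i j := i ≠ j ∧ ((i.val + 1) % n = j.val ∨ (j.val + 1) % n = i.val)
  symm := by
    constructor
    rintro i j ⟨h, h'⟩
    exact ⟨h.symm, h'.symm⟩
  loopless := by
    constructor
    rintro i ⟨h, _⟩
    exact h rfl

/-- `r` is a transitive orientation of the edges of `G`. -/
def TransOrientation {V : Type*} (G : SimpleGraph V) (r : V → V → Prop) : Prop :=
  (∀ i j, G.Adj i j ↔ (r i j ∨ r j i)) ∧ (∀ i j, r i j → ¬ r j i) ∧ Transitive r

/-!
A pair of elements fails to compete exactly when all rankings order it the same way. Hence the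
linear extensions of a transitive orientation of `G` have competitivity graph `Gᶜ`, and a bipartite
graph, such as an even cycle, is oriented transitively by directing every edge from one colour
class to the other.

In a transitive orientation, two edges `ij` and `ik` with `j`, `k` non-adjacent both leave `i` or
both enter it. In the complement of `C_n` the neighbours of `i` form a path of `C_n`, so this
propagates along the path and makes every vertex a source or a sink; for `n ≥ 6` this is impossible
on the triangle `0, 2, 4`.
-/

section LinearExtensions

variable {n : ℕ} {r : Fin n → Fin n → Prop} {i j : Fin n}

/-- The ranking `c` is a linear extension of `r`: it ranks `i` before `j` whenever `r i j`. -/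
def IsLinearExtension (r : Fin n → Fin n → Prop) (c : Equiv.Perm (Fin n)) : Prop :=
  ∀ ⦃i j⦄, r i j → Prec c i j

theorem prec_sort_of_lt {α : Type*} [LinearOrder α] {f : Fin n → α} (h : f i < f j) :
    Prec (Tuple.sort f) i j := by
  by_contra hij
  have hle : f j ≤ f i := by
    simpa only [Equiv.Perm.coe_inv, Function.comp_apply, Equiv.apply_symm_apply] using
      Tuple.monotone_sort f (not_lt.mp hij)
  exact h.not_ge hle

theorem card_predecessors_lt {α : Type*} [Fintype α] {r : α → α → Prop} [DecidableRel r]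
    [IsStrictOrder α r] {a b : α} (h : r a b) :
    Finset.card {x | r x a} < Finset.card {x | r x b} := by
  refine Finset.card_lt_card (Finset.ssubset_iff_of_subset ?_ |>.mpr ⟨a, ?_, ?_⟩)
  · exact Finset.monotone_filter_right _ fun x _ hxa => _root_.trans hxa h
  · simpa using h
  · simpa using irrefl_of r a

-- Sorting by the number of predecessors extends `r`; listing the down-set of `j`, which does not
-- contain `i`, ahead of everything else moreover puts `j` before `i`.
theorem exists_isLinearExtension_prec [IsStrictOrder (Fin n) r] (hne : i ≠ j) (hij : ¬ r i j) :
    ∃ c, IsLinearExtension r c ∧ Prec c j i := by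
  classical
  let outside (x : Fin n) : Bool := !decide (x = j ∨ r x j)
  let key (x : Fin n) : Bool ×ₗ ℕ := toLex (outside x, Finset.card {y | r y x})
  have outside_mono {a b : Fin n} (hab : r a b) : outside a ≤ outside b := by
    have down_closed : b = j ∨ r b j → a = j ∨ r a j := by
      rintro (rfl | hbj)
      exacts [.inr hab, .inr (_root_.trans hab hbj)]
    simpa [outside, Bool.le_iff_imp, not_or] using mt down_closed
  refine ⟨Tuple.sort key, fun a b hab => prec_sort_of_lt ?_, prec_sort_of_lt ?_⟩
  · exact Prod.Lex.toLex_lt_toLex'.mpr ⟨outside_mono hab, fun _ => card_predecessors_lt hab⟩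
  · exact Prod.Lex.toLex_lt_toLex.mpr (.inl (by simp [outside, hne, hij]))

end LinearExtensions

namespace TransOrientation

section

variable {V : Type*} {G : SimpleGraph V} {r : V → V → Prop} {i j k : V}

theorem isStrictOrder (h : TransOrientation G r) : IsStrictOrder V r where
  irrefl i hi := h.2.1 i i hi hi
  trans _ _ _ hij hjk := h.2.2 hij hjk

theorem rel_of_not_adj (h : TransOrientation G r) (hik : G.Adj i k) (hjk : ¬ G.Adj j k)
    (hij : r i j) : r i k := by
  refine ((h.1 i k).mp hik).resolve_right fun hki => hjk ?_
  exact (h.1 j k).mpr (.inr (h.2.2 hki hij))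

theorem rel_iff_of_not_adj (h : TransOrientation G r) (hij : G.Adj i j) (hik : G.Adj i k)
    (hjk : ¬ G.Adj j k) : r i j ↔ r i k :=
  ⟨h.rel_of_not_adj hik hjk, h.rel_of_not_adj hij fun hkj => hjk hkj.symm⟩

theorem not_rel_of_triangle (h : TransOrientation G r) (hjk : G.Adj j k)
    (hi : r i j ↔ r i k) (hj : r j k ↔ r j i) (hk : r k i ↔ r k j) : ¬ r i j := by
  intro hij
  have hkj : r k j := ((h.1 j k).mp hjk).resolve_left fun hjk' => h.2.1 i j hij (hj.mp hjk')
  exact h.2.1 i k (hi.mp hij) (hk.mpr hkj)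

theorem false_of_triangle (h : TransOrientation G r) (hij : G.Adj i j) (hjk : G.Adj j k)
    (hik : G.Adj i k) (hi : r i j ↔ r i k) (hj : r j k ↔ r j i) (hk : r k i ↔ r k j) : False :=
  ((h.1 i j).mp hij).elim (h.not_rel_of_triangle hjk hi hj hk)
    (h.not_rel_of_triangle hik hj.symm hi.symm hk.symm)

end

theorem exists_competitivityGraph_eq_compl {n : ℕ} {G : SimpleGraph (Fin n)}
    {r : Fin n → Fin n → Prop} (h : TransOrientation G r) :
    ∃ (m : ℕ) (c : Fin m → Equiv.Perm (Fin n)), competitivityGraph c = Gᶜ := by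
  classical
  have := h.isStrictOrder
  let e := Fintype.equivFin {c // IsLinearExtension r c}
  refine ⟨_, fun s => (e.symm s).val, ?_⟩
  ext i j
  rw [SimpleGraph.compl_adj, h.1, not_or]
  constructor
  · intro hij
    have hne := hij.ne
    obtain ⟨s, t, hs, ht⟩ := hij
    exact ⟨hne, fun hr => ht.asymm ((e.symm t).2 hr), fun hr => hs.asymm ((e.symm s).2 hr)⟩
  · rintro ⟨hne, hij, hji⟩
    obtain ⟨c, hc, hcij⟩ := exists_isLinearExtension_prec hne.symm hji
    obtain ⟨d, hd, hdji⟩ := exists_isLinearExtension_prec hne hij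
    exact ⟨e ⟨c, hc⟩, e ⟨d, hd⟩, by simpa using hcij, by simpa using hdji⟩

end TransOrientation

theorem exists_transOrientation_of_isBipartite {V : Type*} {G : SimpleGraph V}
    (hG : G.IsBipartite) : ∃ r, TransOrientation G r := by
  obtain ⟨color⟩ := hG
  refine ⟨fun i j => G.Adj i j ∧ color i < color j, fun i j => ?_, ?_, ?_⟩
  · constructor
    · intro hij
      exact (color.valid hij).lt_or_gt.imp (⟨hij, ·⟩) (⟨hij.symm, ·⟩)
    · rintro (⟨hij, -⟩ | ⟨hji, -⟩)
      exacts [hij, hji.symm]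
  · exact fun i j hij hji => hij.2.asymm hji.2
  · rintro i j k ⟨-, hij⟩ ⟨-, hjk⟩
    omega

section Cycles

variable {n : ℕ}

theorem cycleGraph_adj_iff {i j : Fin n} :
    (cycleGraph n).Adj i j ↔ i.val ≠ j.val ∧ (i.val + 1 = j.val ∨ j.val + 1 = i.val ∨
      (i.val = 0 ∧ j.val + 1 = n) ∨ (j.val = 0 ∧ i.val + 1 = n)) := by
  have succ_mod (a : Fin n) : (a.val + 1) % n = if a.val + 1 = n then 0 else a.val + 1 := by
    split_ifs with ha
    · rw [ha, Nat.mod_self]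
    · exact Nat.mod_eq_of_lt (by omega)
  simp only [cycleGraph, succ_mod, ne_eq, Fin.ext_iff]
  split_ifs <;> omega

theorem compl_cycleGraph_adj_iff {i j : Fin n} :
    (cycleGraph n)ᶜ.Adj i j ↔ i.val ≠ j.val ∧ i.val + 1 ≠ j.val ∧ j.val + 1 ≠ i.val ∧
      ¬ (i.val = 0 ∧ j.val + 1 = n) ∧ ¬ (j.val = 0 ∧ i.val + 1 = n) := by
  rw [SimpleGraph.compl_adj, cycleGraph_adj_iff, ne_eq, Fin.ext_iff]
  tauto

theorem cycleGraph_isBipartite (hn : Even n) : (cycleGraph n).IsBipartite := by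
  obtain ⟨m, rfl⟩ := hn
  refine ⟨SimpleGraph.Coloring.mk (fun i => Fin.ofNat 2 i.val) fun {i j} hij => ?_⟩
  rw [cycleGraph_adj_iff] at hij
  simp only [ne_eq, Fin.ext_iff, Fin.val_ofNat]
  omega

theorem TransOrientation.rel_iff_of_Icc_adj {r : Fin n → Fin n → Prop}
    (h : TransOrientation (cycleGraph n)ᶜ r) {i a b : Fin n} (hab : a ≤ b)
    (hi : ∀ x ∈ Set.Icc a b, (cycleGraph n)ᶜ.Adj i x) : r i a ↔ r i b := by
  obtain ⟨b, hb⟩ := b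
  induction b, (show a.val ≤ b from hab) using Nat.le_induction with
  | base => rfl
  | succ m ham ih =>
    let x : Fin n := ⟨m, by omega⟩
    let y : Fin n := ⟨m + 1, hb⟩
    have hxy : ¬ (cycleGraph n)ᶜ.Adj x y := by simp only [compl_cycleGraph_adj_iff, x, y]; omega
    have hax : r i a ↔ r i x := ih x.2 ham fun z hz => hi z ⟨hz.1, hz.2.trans (Nat.le_succ m)⟩
    exact hax.trans <| h.rel_iff_of_not_adj (hi x ⟨ham, Nat.le_succ m⟩)
      (hi y ⟨hab, le_rfl⟩) hxy

theorem not_exists_transOrientation_compl_cycleGraph (hn : 6 ≤ n) :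
    ¬ ∃ r, TransOrientation (cycleGraph n)ᶜ r := by
  rintro ⟨r, h⟩
  let v0 : Fin n := ⟨0, by omega⟩
  let v2 : Fin n := ⟨2, by omega⟩
  let v4 : Fin n := ⟨4, by omega⟩
  let last : Fin n := ⟨n - 1, by omega⟩
  have same_at_0 : r v0 v2 ↔ r v0 v4 := h.rel_iff_of_Icc_adj (by simp [v2, v4]) fun x hx => by
    simp only [Set.mem_Icc, Fin.le_def, v2, v4] at hx
    simp only [compl_cycleGraph_adj_iff, v0]
    omega
  have same_at_2 : r v2 v4 ↔ r v2 v0 := by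
    have four_le_last : v4 ≤ last := Fin.le_def.mpr (show 4 ≤ n - 1 by omega)
    have to_last : r v2 v4 ↔ r v2 last := h.rel_iff_of_Icc_adj four_le_last fun x hx => by
      simp only [Set.mem_Icc, Fin.le_def, v4, last] at hx
      simp only [compl_cycleGraph_adj_iff, v2]
      omega
    refine to_last.trans (h.rel_iff_of_not_adj ?_ ?_ ?_) <;>
      simp only [compl_cycleGraph_adj_iff, v0, v2, last, true_and] <;> omega
  have same_at_4 : r v4 v0 ↔ r v4 v2 := h.rel_iff_of_Icc_adj (by simp [v0, v2]) fun x hx => by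
    simp only [Set.mem_Icc, Fin.le_def, v0, v2] at hx
    simp only [compl_cycleGraph_adj_iff, v4]
    omega
  refine h.false_of_triangle ?_ ?_ ?_ same_at_0 same_at_2 same_at_4 <;>
    simp only [compl_cycleGraph_adj_iff, v0, v2, v4] <;> omega

end Cycles

theorem complC6_competitivity_not_comparability_general {n : ℕ} (hn : 6 ≤ n) (heven : Even n) :
    (∃ (r : ℕ) (c : Fin r → Equiv.Perm (Fin n)),
        Nonempty (competitivityGraph c ≃g (cycleGraph n)ᶜ)) ∧
    ¬ ∃ rel : Fin n → Fin n → Prop, TransOrientation (cycleGraph n)ᶜ rel := by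
  obtain ⟨_, h⟩ := exists_transOrientation_of_isBipartite (cycleGraph_isBipartite heven)
  obtain ⟨r, c, hc⟩ := h.exists_competitivityGraph_eq_compl
  exact ⟨⟨r, c, ⟨hc ▸ .refl⟩⟩, not_exists_transOrientation_compl_cycleGraph hn⟩

/-- The complement of `C_6` is a competitivity graph (of some family of rankings of
`Fin 6`) but not a comparability graph (it admits no transitive orientation). -/
theorem complC6_competitivity_not_comparability :
    (∃ (r : ℕ) (c : Fin r → Equiv.Perm (Fin 6)),
        Nonempty (competitivityGraph c ≃g (cycleGraph 6)ᶜ)) ∧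
    ¬ ∃ rel : Fin 6 → Fin 6 → Prop, TransOrientation (cycleGraph 6)ᶜ rel :=
  complC6_competitivity_not_comparability_general le_rfl (by decide)
end

section
/- Let R = (c_1, …, c_r) be a finite family of rankings of Fin n and let D be a set of eventual competitors (a connected component of the competitivity graph G_c(R)). If a, b ∈ D, x ∈ Fin n, and there is a ranking c_m ∈ R with a ≺_{c_m} x ≺_{c_m} b, then x ∈ D. -/
/-!
Say that `i` precedes `j` somewhere if some ranking of the family puts `i` before `j`. Two elements
compete when each precedes the other somewhere. Preceding somewhere is negatively transitive because
every ranking is: if `v` precedes `a` somewhere, then `v` precedes `x` somewhere or `x` precedes `a`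
somewhere. Now let `a` precede `x` somewhere, and follow a path of competitors from `a` to `b`. At
the first step, to `v` say, either `x` precedes `a` somewhere, so that `a` and `x` compete, or `v`
precedes `x` somewhere, and the argument continues from `v`. If it gets as far as `b`, which `x`
precedes somewhere, then `b` and `x` compete.
-/

theorem reachable_of_rel_of_rel {α : Type*} {G : SimpleGraph α} {R : α → α → Prop}
    [IsOrderConnected α R] (adj_iff : ∀ i j, G.Adj i j ↔ R i j ∧ R j i) {a b x : α}
    (hab : G.Reachable a b) (hax : R a x) (hxb : R x b) : G.Reachable a x := by
  obtain ⟨w⟩ := hab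
  induction w with
  | nil => exact ((adj_iff _ _).2 ⟨hax, hxb⟩).reachable
  | cons hav _ ih =>
    have hva := ((adj_iff _ _).1 hav).2
    rcases IsOrderConnected.conn _ x _ hva with hvx | hxa
    · exact hav.reachable.trans (ih hvx hxb)
    · exact ((adj_iff _ _).2 ⟨hax, hxa⟩).reachable

instance isOrderConnected_exists {ι α : Type*} (R : ι → α → α → Prop)
    [∀ s, IsOrderConnected α (R s)] : IsOrderConnected α fun i j ↦ ∃ s, R s i j where
  conn i k j := fun ⟨s, hij⟩ ↦ (IsOrderConnected.conn i k j hij).imp (⟨s, ·⟩) (⟨s, ·⟩)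

/-- The competitivity graph of an arbitrary family of irreflexive relations, where `R s i j` means
that `i` comes before `j` in the ranking `s`. The two quantifiers are kept in prenex form, so that
`competitivityGraph c` is by definition the graph of the relations `Prec (c s)`. -/
def relCompetitivityGraph {ι α : Type*} (R : ι → α → α → Prop) [∀ s, Std.Irrefl (R s)] :
    SimpleGraph α where
  Adj i j := ∃ s t, R s i j ∧ R t j i
  symm := ⟨fun _ _ ⟨s, t, hij, hji⟩ ↦ ⟨t, s, hji, hij⟩⟩
  loopless := ⟨fun i ⟨s, _, hii, _⟩ ↦ irrefl_of (R s) i hii⟩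

theorem relCompetitivityGraph_adj_iff {ι α : Type*} (R : ι → α → α → Prop)
    [∀ s, Std.Irrefl (R s)] (i j : α) :
    (relCompetitivityGraph R).Adj i j ↔ (∃ s, R s i j) ∧ ∃ t, R t j i :=
  exists_and_exists_comm.symm

/-- Strict weak orders satisfy `IsOrderConnected`, so the rankings may have ties. -/
theorem eventualCompetitors_convex_general {ι α : Type*} (R : ι → α → α → Prop)
    [∀ s, Std.Irrefl (R s)] [∀ s, IsOrderConnected α (R s)]
    (D : (relCompetitivityGraph R).ConnectedComponent) {a b x : α}
    (ha : a ∈ D.supp) (hb : b ∈ D.supp) {s t : ι} (hax : R s a x) (hxb : R t x b) :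
    x ∈ D.supp := by
  have hreach : (relCompetitivityGraph R).Reachable a x :=
    reachable_of_rel_of_rel (R := fun i j ↦ ∃ s, R s i j) (relCompetitivityGraph_adj_iff R)
      (D.reachable_of_mem_supp ha hb) ⟨s, hax⟩ ⟨t, hxb⟩
  exact (SimpleGraph.ConnectedComponent.sound hreach).symm.trans ha

instance Prec.irrefl {n : ℕ} (c : Equiv.Perm (Fin n)) : Std.Irrefl (Prec c) :=
  ⟨fun i ↦ lt_irrefl (c⁻¹ i)⟩

instance Prec.isOrderConnected {n : ℕ} (c : Equiv.Perm (Fin n)) :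
    IsOrderConnected (Fin n) (Prec c) :=
  ⟨fun i k j ↦ IsOrderConnected.conn (lt := (· < ·)) (c⁻¹ i) (c⁻¹ k) (c⁻¹ j)⟩

/-- Convexity of sets of eventual competitors: if `a, b` belong to a connected component
`D` of the competitivity graph and `a ≺_{c_m} x ≺_{c_m} b` in some ranking `c_m`, then
`x` belongs to `D`. -/
theorem eventualCompetitors_convex {n r : ℕ} (c : Fin r → Equiv.Perm (Fin n))
    (D : (competitivityGraph c).ConnectedComponent) (a b x : Fin n)
    (ha : a ∈ D.supp) (hb : b ∈ D.supp) (m : Fin r)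
    (hax : Prec (c m) a x) (hxb : Prec (c m) x b) :
    x ∈ D.supp :=
  eventualCompetitors_convex_general (fun s ↦ Prec (c s)) D ha hb hax hxb
end
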